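/- Let F be an algebraically closed field of characteristic 0, let n ∈ ℕ, and let f ∈ F⟨X⟩ with deg f ≤ n. If tr(f(A)) = 0 for every A ∈ Mₙ(F)^g, then f is a sum of commutators in F⟨X⟩, i.e., f lies in the F-linear span of elements pq − qp with p, q ∈ F⟨X⟩. -/

import Mathlib

/-- The subspace of the free algebra spanned by words of length at most `d`. -/
def wordSpan (F : Type*) [Field F] (g d : ℕ) : Submodule F (FreeAlgebra F (Fin g)) :=
  Submodule.span F
    {x : FreeAlgebra F (Fin g) |
      ∃ w : List (Fin g), w.length ≤ d ∧ x = (w.map (FreeAlgebra.ι F)).prod}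

/-!
Modulo commutators a word depends only on its class under cyclic rotation, so it suffices that the
coefficients of `f` sum to zero over each class. Scaling the matrices by `0, 1, …, n` separates the
homogeneous components of `f` (a Vandermonde argument). To isolate the class of a word `w` of length
`m ≤ n`, let the letters act as the edges of an `m`-cycle labelled by `w`: the trace of a word of
length `m` counts the vertices from which it can be read around the cycle, and this vanishes unless
the word is a rotation of `w`. For rotations of `w` the count is constant and between `1` and `n`,
so it can be cancelled as soon as `n!` is not a zero divisor.
-/

open scoped nonZeroDivisors

section Rotation

theorem exists_prod_eq_mul_of_isRotated {M : Type*} [Monoid M] {l l' : List M} (h : l ~r l') :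
    ∃ p q : M, l.prod = p * q ∧ l'.prod = q * p := by
  obtain ⟨k, rfl⟩ := h
  refine ⟨(l.take (k % l.length)).prod, (l.drop (k % l.length)).prod, ?_, ?_⟩
  · rw [← List.prod_append, List.take_append_drop]
  · rw [List.rotate_eq_drop_append_take_mod, List.prod_append]

theorem trace_prod_map_eq_of_isRotated {R ι X : Type*} [CommSemiring R] [Fintype ι]
    [DecidableEq ι] (A : X → Matrix ι ι R) {v w : List X} (h : v ~r w) :
    (v.map A).prod.trace = (w.map A).prod.trace := by
  obtain ⟨p, q, hv, hw⟩ := exists_prod_eq_mul_of_isRotated (h.map A)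
  rw [hv, hw, Matrix.trace_mul_comm]

/-- The `R`-linear span of the commutators of `B`. Passing to the quotient by it makes products
invariant under cyclic rotation of their factors. -/
def commutatorSpan (R B : Type*) [Semiring R] [Ring B] [Module R B] : Submodule R B :=
  Submodule.span R {x : B | ∃ p q : B, x = p * q - q * p}

variable {R B X : Type*} [Ring R] [Ring B] [Module R B]

theorem linearCombination_prod_map_mem_commutatorSpan (A : X → B) {c : List X →₀ R}
    (hc : c.mapDomain ((↑) : List X → Cycle X) = 0) :
    Finsupp.linearCombination R (fun w : List X ↦ (w.map A).prod) c ∈ commutatorSpan R B := by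
  let π := (commutatorSpan R B).mkQ
  have π_prod_eq (v w : List X) (h : v ~r w) : π (v.map A).prod = π (w.map A).prod := by
    obtain ⟨p, q, hv, hw⟩ := exists_prod_eq_mul_of_isRotated (h.map A)
    rw [hv, hw]
    exact (Submodule.Quotient.eq _).2 (Submodule.subset_span ⟨p, q, rfl⟩)
  let φ : Cycle X → B ⧸ commutatorSpan R B := Quotient.lift (fun w ↦ π (w.map A).prod) π_prod_eq
  rw [← Submodule.Quotient.mk_eq_zero, ← Submodule.mkQ_apply, Finsupp.apply_linearCombination]
  calc Finsupp.linearCombination R (φ ∘ (↑)) c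
      = Finsupp.linearCombination R φ (c.mapDomain (↑)) :=
        (Finsupp.linearCombination_mapDomain R _ c).symm
    _ = 0 := by rw [hc, map_zero]

end Rotation

section Homogeneous

variable {R : Type*} [CommRing R] {n : ℕ}

theorem natCast_mem_nonZeroDivisors_of_factorial (hn : (n.factorial : R) ∈ R⁰) {k : ℕ}
    (hk : 0 < k) (hkn : k ≤ n) : (k : R) ∈ R⁰ := by
  obtain ⟨j, hj⟩ := Nat.dvd_factorial hk hkn
  rw [hj, Nat.cast_mul, mul_mem_nonZeroDivisors] at hn
  exact hn.1

theorem superFactorial_mem_nonZeroDivisors (hn : (n.factorial : R) ∈ R⁰) :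
    (n.superFactorial : R) ∈ R⁰ := by
  induction n with
  | zero => simp
  | succ n ih =>
    have hn' : (n.factorial : R) ∈ R⁰ := by
      rw [Nat.factorial_succ, Nat.cast_mul, mul_mem_nonZeroDivisors] at hn
      exact hn.2
    rw [Nat.superFactorial_succ, Nat.cast_mul]
    exact mul_mem hn (ih hn')

theorem eq_zero_of_sum_natCast_pow_mul_eq_zero (hn : (n.factorial : R) ∈ R⁰) {a : ℕ → R}
    (h : ∀ t ≤ n, ∑ d ∈ Finset.range (n + 1), (t : R) ^ d * a d = 0) {d : ℕ} (hd : d ≤ n) :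
    a d = 0 := by
  let V : Matrix (Fin (n + 1)) (Fin (n + 1)) R := Matrix.vandermonde fun i ↦ ((i : ℕ) : R)
  have det_V : V.det ∈ R⁰ := by
    rw [Matrix.det_vandermonde_id_eq_superFactorial]
    exact superFactorial_mem_nonZeroDivisors hn
  have V_mulVec : V.mulVec (fun i ↦ a i) = V.mulVec 0 := by
    ext t
    rw [Matrix.mulVec_zero, Pi.zero_apply, ← h t t.is_le, Finset.sum_range]
    rfl
  exact congrFun (Matrix.mulVec_injective_of_det_mem_nonZeroDivisors det_V V_mulVec)
    ⟨d, Nat.lt_succ_of_le hd⟩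

theorem sum_filter_length_eq_zero {B X : Type*} [Semiring B] [Algebra R B] (τ : B →ₗ[R] R)
    (hn : (n.factorial : R) ∈ R⁰) {s : Finset (List X)} (hs : ∀ v ∈ s, v.length ≤ n)
    {c : List X → R} (h : ∀ A : X → B, ∑ v ∈ s, c v * τ (v.map A).prod = 0)
    (A : X → B) {d : ℕ} (hd : d ≤ n) :
    ∑ v ∈ s with v.length = d, c v * τ (v.map A).prod = 0 := by
  refine eq_zero_of_sum_natCast_pow_mul_eq_zero hn
    (a := fun d ↦ ∑ v ∈ s with v.length = d, c v * τ (v.map A).prod) (fun t _ ↦ ?_) hd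
  have τ_smul (v : List X) :
      τ (v.map fun x ↦ (t : R) • A x).prod = (t : R) ^ v.length * τ (v.map A).prod := by
    rw [← smul_eq_mul, ← map_smul, ← List.length_map A, List.smul_prod, List.map_map]
    rfl
  have length_mem : ∀ v ∈ s, v.length ∈ Finset.range (n + 1) :=
    fun v hv ↦ Finset.mem_range_succ_iff.2 (hs v hv)
  calc ∑ d ∈ Finset.range (n + 1), (t : R) ^ d * ∑ v ∈ s with v.length = d, c v * τ (v.map A).prod
      = ∑ d ∈ Finset.range (n + 1), ∑ v ∈ s with v.length = d,
          c v * τ (v.map fun x ↦ (t : R) • A x).prod := by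
        refine Finset.sum_congr rfl fun d _ ↦ ?_
        rw [Finset.mul_sum]
        refine Finset.sum_congr rfl fun v hv ↦ ?_
        rw [τ_smul, (Finset.mem_filter.1 hv).2, mul_left_comm]
    _ = ∑ v ∈ s, c v * τ (v.map fun x ↦ (t : R) • A x).prod :=
        Finset.sum_fiberwise_of_maps_to length_mem _
    _ = 0 := h _

end Homogeneous

section TransitionMatrix

variable (R : Type*) [CommSemiring R] {ι X : Type*} [DecidableEq ι] [DecidableEq X]

/-- The action of the letter `x` on the states `ι` of a deterministic machine: the only step out of
the state `a` leads to `next a` and reads the letter `label a`, or is blocked if `label a = none`.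
Products of these matrices record which words can be read along which walks. -/
def transitionMatrix (next : ι → ι) (label : ι → Option X) (x : X) : Matrix ι ι R :=
  Matrix.of fun a b ↦ if label a = some x ∧ next a = b then 1 else 0

variable [Fintype ι]

theorem prod_map_transitionMatrix_apply (next : ι → ι) (label : ι → Option X) (v : List X)
    (a b : ι) :
    (v.map (transitionMatrix R next label)).prod a b =
      if (List.iterate next a v.length).map label = v.map some ∧ next^[v.length] a = b
      then 1 else 0 := by
  induction v generalizing a with
  | nil => simp [Matrix.one_apply]
  | cons x v ih =>
    have step : (transitionMatrix R next label x *
        (v.map (transitionMatrix R next label)).prod) a b =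
          if label a = some x then (v.map (transitionMatrix R next label)).prod (next a) b
          else 0 := by
      simp [Matrix.mul_apply, transitionMatrix, ite_and]
    rw [List.map_cons, List.prod_cons, step, ih, ← ite_and]
    simp [and_assoc]

theorem trace_prod_map_transitionMatrix (next : ι → ι) (label : ι → Option X) (v : List X) :
    (v.map (transitionMatrix R next label)).prod.trace =
      Finset.card {a | (List.iterate next a v.length).map label = v.map some ∧
        next^[v.length] a = a} := by
  simp only [Matrix.trace, Matrix.diag_apply, prod_map_transitionMatrix_apply, Finset.sum_boole]

end TransitionMatrix

section CycleMatrix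

variable {n : ℕ} [NeZero n]

/-- The successor map of the cycle `0 → 1 → ⋯ → m - 1 → 0` inside `Fin n`, for `0 < m ≤ n`. Only
its values at `a < m` are meaningful. -/
def cyclicNext (m : ℕ) (a : Fin n) : Fin n :=
  Fin.ofNat n ((a + 1) % m)

theorem val_iterate_cyclicNext {m : ℕ} (hm : m ≤ n) {a : Fin n} (ha : a < m) (k : ℕ) :
    ((cyclicNext m)^[k] a : ℕ) = (a + k) % m := by
  induction k with
  | zero => exact (Nat.mod_eq_of_lt ha).symm
  | succ k ih =>
    have mod_lt : (a + k + 1) % m < n := (Nat.mod_lt _ (by omega)).trans_le hm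
    rw [Function.iterate_succ_apply', cyclicNext, ih, Nat.mod_add_mod, Fin.val_ofNat,
      Nat.mod_eq_of_lt mod_lt, add_assoc]

theorem iterate_cyclicNext_self {m : ℕ} (hm : m ≤ n) {a : Fin n} (ha : a < m) :
    (cyclicNext m)^[m] a = a :=
  Fin.ext <| by rw [val_iterate_cyclicNext hm ha, Nat.add_mod_right, Nat.mod_eq_of_lt ha]

variable {X : Type*} {v w : List X}

theorem map_getElem?_iterate_cyclicNext (hw : w.length ≤ n) {a : Fin n} (ha : a < w.length) :
    (List.iterate (cyclicNext w.length) a w.length).map (fun b : Fin n ↦ w[(b : ℕ)]?) =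
      (w.rotate a).map some := by
  refine List.ext_getElem (by simp) fun i hi _ ↦ ?_
  have hi' : i < w.length := by simpa using hi
  simp only [List.getElem_map, List.getElem_iterate, val_iterate_cyclicNext hw ha]
  rw [add_comm, ← List.getElem?_rotate hi', List.getElem?_eq_getElem]

theorem isRotated_of_map_getElem?_iterate_cyclicNext (hw : w.length ≤ n)
    (hvw : v.length = w.length) {a : Fin n}
    (h : (List.iterate (cyclicNext w.length) a w.length).map (fun b : Fin n ↦ w[(b : ℕ)]?) =
      v.map some) :
    v ~r w := by
  rcases lt_or_ge (a : ℕ) w.length with ha | ha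
  · rw [map_getElem?_iterate_cyclicNext hw ha] at h
    rw [← List.map_injective_iff.2 (Option.some_injective X) h]
    exact List.IsRotated.forall w a
  · cases v with
    | nil => rw [List.length_eq_zero_iff.1 hvw.symm]
    | cons x v =>
      rw [← hvw, List.length_cons, List.iterate, List.map_cons, List.map_cons,
        List.getElem?_eq_none ha] at h
      simp at h

variable (R : Type*) [CommSemiring R] [DecidableEq X]

variable (n) in
/-- The matrix by which the letter `x` acts on a cycle through the first `w.length` elements of
`Fin n` whose edges carry the successive letters of `w`. No letter can be read from the remaining
elements. -/
def cycleMatrix (w : List X) (x : X) : Matrix (Fin n) (Fin n) R :=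
  transitionMatrix R (cyclicNext w.length) (fun a ↦ w[(a : ℕ)]?) x

theorem trace_prod_map_cycleMatrix_of_not_isRotated (hw : w.length ≤ n)
    (hvw : v.length = w.length) (h : ¬ v ~r w) :
    (v.map (cycleMatrix n R w)).prod.trace = 0 := by
  unfold cycleMatrix
  rw [trace_prod_map_transitionMatrix, hvw, Finset.filter_false_of_mem, Finset.card_empty,
    Nat.cast_zero]
  exact fun a _ ha ↦ h (isRotated_of_map_getElem?_iterate_cyclicNext hw hvw ha.1)

theorem exists_trace_prod_map_cycleMatrix_self (hw : w.length ≤ n) :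
    ∃ k : ℕ, 0 < k ∧ k ≤ n ∧ (w.map (cycleMatrix n R w)).prod.trace = k := by
  refine ⟨_, ?_, (Finset.card_le_univ _).trans_eq (Fintype.card_fin n),
    trace_prod_map_transitionMatrix R _ _ w⟩
  refine Finset.card_pos.2 ⟨0, Finset.mem_filter_univ _ |>.2 ?_⟩
  rcases w.length.eq_zero_or_pos with h | h
  · simp [List.length_eq_zero_iff.1 h]
  · have h0 : ((0 : Fin n) : ℕ) < w.length := h
    refine ⟨?_, iterate_cyclicNext_self hw h0⟩
    rw [map_getElem?_iterate_cyclicNext hw h0, Fin.val_zero, List.rotate_zero]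

theorem exists_trace_prod_map_eq_ite_isRotated (hw : w.length ≤ n) :
    ∃ (A : X → Matrix (Fin n) (Fin n) R) (k : ℕ), 0 < k ∧ k ≤ n ∧
      ∀ v, v.length = w.length → (v.map A).prod.trace = if v ~r w then (k : R) else 0 := by
  obtain ⟨k, k_pos, k_le, hk⟩ := exists_trace_prod_map_cycleMatrix_self R hw
  refine ⟨cycleMatrix n R w, k, k_pos, k_le, fun v hvw ↦ ?_⟩
  split_ifs with h
  · rw [trace_prod_map_eq_of_isRotated _ h, hk]
  · exact trace_prod_map_cycleMatrix_of_not_isRotated R hw hvw h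

end CycleMatrix

section LowDegree

theorem mapDomain_apply_eq_sum_filter {α β M : Type*} [AddCommMonoid M] [DecidableEq β]
    (f : α → β) (c : α →₀ M) (b : β) :
    c.mapDomain f b = ∑ a ∈ c.support with f a = b, c a := by
  rw [Finsupp.mapDomain, Finsupp.sum_apply, Finsupp.sum, Finset.sum_filter]
  simp only [Finsupp.single_apply]

variable {R X : Type*} [CommRing R] {n : ℕ}

theorem mapDomain_coe_cycle_eq_zero (hn : 0 < n) (hfac : (n.factorial : R) ∈ R⁰)
    {c : List X →₀ R} (hc : ∀ v ∈ c.support, v.length ≤ n)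
    (htr : ∀ A : X → Matrix (Fin n) (Fin n) R,
      ∑ v ∈ c.support, c v * (v.map A).prod.trace = 0) :
    c.mapDomain ((↑) : List X → Cycle X) = 0 := by
  classical
  have : NeZero n := ⟨hn.ne'⟩
  ext s
  induction s using Quotient.inductionOn with | _ w
  change c.mapDomain (↑) (w : Cycle X) = 0
  rw [mapDomain_apply_eq_sum_filter]
  simp only [Cycle.coe_eq_coe]
  have length_eq (v : List X) (h : v ~r w) : v.length = w.length := h.perm.length_eq
  rcases lt_or_ge n w.length with hw | hw
  · rw [Finset.filter_false_of_mem, Finset.sum_empty]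
    exact fun v hv h ↦ (hc v hv).not_gt (length_eq v h ▸ hw)
  obtain ⟨A, k, k_pos, k_le, trace_eq⟩ := exists_trace_prod_map_eq_ite_isRotated R hw
  refine (mem_nonZeroDivisors_iff_right.1
    (natCast_mem_nonZeroDivisors_of_factorial hfac k_pos k_le)) _ ?_
  calc (∑ v ∈ c.support with v ~r w, c v) * (k : R)
      = ∑ v ∈ c.support with v.length = w.length, c v * (v.map A).prod.trace := by
        rw [Finset.sum_mul, Finset.sum_filter, Finset.sum_filter]
        refine Finset.sum_congr rfl fun v _ ↦ ?_
        by_cases hv : v.length = w.length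
        · rw [if_pos hv, trace_eq v hv, mul_ite, mul_zero]
        · rw [if_neg hv, if_neg (mt (length_eq v) hv)]
    _ = 0 := sum_filter_length_eq_zero (Matrix.traceLinearMap (Fin n) R R) hfac hc htr A hw

end LowDegree

theorem trace_zero_of_low_degree_general {R X : Type*} [CommRing R] {n : ℕ} (hn : 0 < n)
    (hfac : (n.factorial : R) ∈ R⁰) {f : FreeAlgebra R X}
    (hdeg : f ∈ Submodule.span R
      {x : FreeAlgebra R X | ∃ w : List X, w.length ≤ n ∧ x = (w.map (FreeAlgebra.ι R)).prod})
    (htr : ∀ A : X → Matrix (Fin n) (Fin n) R, (FreeAlgebra.lift R A f).trace = 0) :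
    f ∈ Submodule.span R
      {x : FreeAlgebra R X | ∃ p q : FreeAlgebra R X, x = p * q - q * p} := by
  let word (w : List X) : FreeAlgebra R X := (w.map (FreeAlgebra.ι R)).prod
  have words_eq : {x | ∃ w : List X, w.length ≤ n ∧ x = word w} = word '' {w | w.length ≤ n} := by
    simp only [Set.image, Set.mem_ofPred_eq, eq_comm]
  rw [words_eq, Finsupp.mem_span_image_iff_linearCombination] at hdeg
  obtain ⟨c, hc, rfl⟩ := hdeg
  refine linearCombination_prod_map_mem_commutatorSpan _
    (mapDomain_coe_cycle_eq_zero hn hfac hc fun A ↦ ?_)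
  simpa [Finsupp.linearCombination_apply, Finsupp.sum, word, map_list_prod] using htr A

/-- If a free polynomial `f` of degree at most `n` has vanishing trace on all
`g`-tuples of `n × n` matrices (`n ≥ 1`) over an algebraically closed field of
characteristic zero, then `f` is a sum of commutators. -/
theorem trace_zero_of_low_degree {F : Type*} [Field F] [IsAlgClosed F] [CharZero F]
    (g n : ℕ) (hn : 0 < n) (f : FreeAlgebra F (Fin g))
    (hdeg : f ∈ wordSpan F g n)
    (htr : ∀ A : Fin g → Matrix (Fin n) (Fin n) F,
      Matrix.trace (FreeAlgebra.lift F A f) = 0) :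
    f ∈ Submodule.span F
      {x : FreeAlgebra F (Fin g) | ∃ p q : FreeAlgebra F (Fin g), x = p * q - q * p} :=
  trace_zero_of_low_degree_general hn
    (mem_nonZeroDivisors_of_ne_zero (Nat.cast_ne_zero.2 n.factorial_ne_zero)) hdeg htr
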